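/- The derivation module D(𝒜₆₉) of the central hyperplane arrangement 𝒜₆₉ in ℂ⁴ with defining equation Q₆₉ = x·y·z·w·(x+y)·(x−y+z)·(x−y−w)·(x+y−z−w) is not a free module over S = ℂ[x,y,z,w]. -/

import Mathlib

open MvPolynomial

noncomputable section

/-- The polynomial ring `S = ℂ[x,y,z,w]`, with `x = X 0`, `y = X 1`, `z = X 2`, `w = X 3`. -/
abbrev S4 : Type := MvPolynomial (Fin 4) ℂ

/-- The linear form `c₀·x + c₁·y + c₂·z + c₃·w` with coefficient vector `c`. -/
noncomputable def linForm (c : Fin 4 → ℂ) : S4 := ∑ i, C (c i) * X i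

/-- A polynomial derivation `θ = a₁∂ₓ + a₂∂_y + a₃∂_z + a₄∂_w` of `S` is identified with
its coefficient tuple `a : Fin 4 → S`; the linear map `derMap f` sends `a` to `θ(f)`. -/
noncomputable def derMap (f : S4) : (Fin 4 → S4) →ₗ[S4] S4 where
  toFun a := ∑ i, a i * pderiv i f
  map_add' a b := by simp [add_mul, Finset.sum_add_distrib]
  map_smul' c a := by simp [Finset.mul_sum, mul_assoc]

/-- The derivation module `D(𝒜)` of the central arrangement whose hyperplanes are the kernels
of the linear forms `linForm (α H)`: all derivations `θ` with `θ(α_H) ∈ S·α_H` for every `H`. -/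
noncomputable def derivModule {ι : Type} (α : ι → (Fin 4 → ℂ)) :
    Submodule S4 (Fin 4 → S4) :=
  ⨅ H, Submodule.comap (derMap (linForm (α H))) (Ideal.span {linForm (α H)})

end

/-- The coefficient vectors of the eight linear factors of Q = xyzw(x+y)(x-y+z)(x-y-w)(x+y-z-w), defining the rigid Cynk–Szemberg octic arrangement 𝒜₆₉ ⊂ ℙ³. -/
noncomputable def A69 : Fin 8 → (Fin 4 → ℂ) :=
  ![![1, 0, 0, 0],
    ![0, 1, 0, 0],
    ![0, 0, 1, 0],
    ![0, 0, 0, 1],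
    ![1, 1, 0, 0],
    ![1, -1, 1, 0],
    ![1, -1, 0, -1],
    ![1, 1, -1, -1]]

/-!
Let four hyperplanes `ℓ₀, …, ℓ₃` meet in a point `p` of `ℙ³`, any three of them independent, with no
other hyperplane of the arrangement through `p`. If `D(𝒜)` had a basis, its determinant would divide
the defining polynomial, by one half of Saito's criterion. On the other hand, differentiating the
linear relation between the `ℓᵢ` shows that for `θ ∈ D(𝒜)` the four quotients `θ(ℓᵢ) / ℓᵢ` take the
same value at `p`, so in the coordinates `m, ℓ₁, ℓ₂, ℓ₃` the determinant is `ℓ₁ ℓ₂ ℓ₃ g` with `g`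
vanishing to order two at `p`. Cancelling `ℓ₁ ℓ₂ ℓ₃`, such a `g` would divide `ℓ₀ u` with
`u(p) ≠ 0`, which vanishes only to order one. In `𝒜₆₉` the point `(1 : -1 : 0 : 0)` is of this kind,
on `z`, `w`, `x + y` and `x + y - z - w`.
-/

open scoped Matrix

/-- The hyperplanes `linForm (α H) = 0` form a central arrangement without repetitions, encoded
by nonzero and pairwise non-proportional coefficient vectors. -/
structure IsArrangement {ι : Type} (α : ι → Fin 4 → ℂ) : Prop where
  ne_zero : ∀ H, α H ≠ 0
  ne_smul : ∀ ⦃H K⦄, H ≠ K → ∀ c : ℂ, α K ≠ c • α H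

/-- A generic quadruple point of the projective arrangement `α`, represented by `p`: the
hyperplanes through `p` are exactly the four hyperplanes `H i`, and any three of them are
independent. -/
structure IsGenericQuadruplePoint {ι : Type} (α : ι → Fin 4 → ℂ) (p : Fin 4 → ℂ)
    (H : Fin 4 ↪ ι) : Prop where
  ne_zero : p ≠ 0
  dotProduct_eq_zero_iff : ∀ K, α K ⬝ᵥ p = 0 ↔ K ∈ Set.range H
  linearIndependent : ∀ k : Fin 4, LinearIndependent ℂ fun i => α (H (k.succAbove i))

/-- The defining polynomial `Q(𝒜)`, the product of the linear forms of the arrangement. -/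
noncomputable def definingPolynomial {ι : Type} [Fintype ι] (α : ι → Fin 4 → ℂ) : S4 :=
  ∏ H, linForm (α H)

/-- The square matrix whose rows are the coefficient vectors of a basis; for derivation modules it
is the matrix in Saito's criterion. -/
noncomputable def saitoMatrix {R n : Type*} [CommRing R] {M : Submodule R (n → R)}
    (b : Module.Basis n R M) : Matrix n n R :=
  Matrix.of fun i => (b i : n → R)

theorem saitoMatrix_mem {R n : Type*} [CommRing R] {M : Submodule R (n → R)}
    (b : Module.Basis n R M) (i : n) : saitoMatrix b i ∈ M :=
  (b i).2

section Divisibility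

theorem dvd_of_forall_dvd_mul {R κ : Type*} [CommMonoidWithZero R] [IsGCDMonoid R]
    {s : Finset κ} {f : κ → R} {d m : R} (hf : ∀ c, (∀ i ∈ s, c ∣ f i) → IsUnit c)
    (hd : ∀ i ∈ s, d ∣ m * f i) : d ∣ m := by
  obtain ⟨_⟩ : Nonempty (NormalizedGCDMonoid R) := inferInstance
  have hgcd : IsUnit (s.gcd f) := hf _ fun i hi => Finset.gcd_dvd hi
  exact hgcd.dvd_mul_right.mp <|
    (Finset.dvd_gcd hd).trans (Finset.gcd_mul_left' s f m).dvd

theorem isUnit_of_forall_dvd_prod_compl_pow {R κ : Type*} [CommMonoidWithZero R] [Nontrivial R]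
    [UniqueFactorizationMonoid R] [Fintype κ] [DecidableEq κ] [Nonempty κ] {q : κ → R}
    (hq : ∀ i, Prime (q i)) (hne : Pairwise fun i j => ¬ q i ∣ q j) {n : ℕ} {c : R}
    (hc : ∀ i, c ∣ (∏ j ∈ {i}ᶜ, q j) ^ n) : IsUnit c := by
  have exists_dvd {r : R} (hr : Prime r) (hrc : r ∣ c) (i : κ) : ∃ j ≠ i, r ∣ q j := by
    simpa using (hr.dvd_finsetProd_iff q).mp (hr.dvd_of_dvd_pow (hrc.trans (hc i)))
  by_contra hunit
  have hc0 : c ≠ 0 := ne_zero_of_dvd_ne_zero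
    (pow_ne_zero n (Finset.prod_ne_zero_iff.mpr fun j _ => (hq j).ne_zero))
    (hc (Classical.arbitrary κ))
  obtain ⟨r, hr, hrc⟩ := WfDvdMonoid.exists_irreducible_factor hunit hc0
  obtain ⟨j, -, hj⟩ := exists_dvd hr.prime hrc (Classical.arbitrary κ)
  obtain ⟨k, hkj, hk⟩ := exists_dvd hr.prime hrc j
  have hassoc : Associated r (q j) := hr.associated_of_dvd (hq j).irreducible hj
  exact hne hkj.symm (hassoc.dvd_iff_dvd_left.mp hk)

end Divisibility

section Determinants

variable {R n : Type*} [CommRing R] [Fintype n] [DecidableEq n]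

theorem det_mem_pow_card {I : Ideal R} {A : Matrix n n R} {s : Finset n}
    (hA : ∀ i, ∀ j ∈ s, A i j ∈ I) : A.det ∈ I ^ s.card := by
  rw [Matrix.det_apply]
  refine Ideal.sum_mem _ fun σ _ => Submodule.smul_of_tower_mem _ _ ?_
  rw [← Finset.prod_mul_prod_compl s, ← Finset.prod_const]
  exact Ideal.mul_mem_right _ _ (Ideal.prod_mem_prod fun j hj => hA _ j hj)

theorem det_mem_pow_card_of_sub_mem {I : Ideal R} {A : Matrix n n R} {s : Finset n} {k : n}
    (hk : k ∉ s) (hA : ∀ i, ∀ j ∈ s, A i j - A i k ∈ I) : A.det ∈ I ^ s.card := by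
  let A' : Matrix n n R := Matrix.of fun i j => if j ∈ s then A i j - A i k else A i j
  have hdet : A.det = A'.det := by
    rw [← Matrix.det_transpose A, ← Matrix.det_transpose A']
    refine Matrix.det_eq_of_forall_row_eq_smul_add_const (fun j => if j ∈ s then 1 else 0) k
      (if_neg hk) fun j i => ?_
    by_cases hj : j ∈ s <;> simp [A', hj, hk]
  rw [hdet]
  exact det_mem_pow_card fun i j hj => by simpa [A', hj] using hA i j hj

theorem det_saitoMatrix_dvd_det {M : Submodule R (n → R)} (b : Module.Basis n R M)
    {A : Matrix n n R} (hA : ∀ i, A i ∈ M) : (saitoMatrix b).det ∣ A.det := by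
  have hmul : A = (Matrix.of fun i j => b.repr ⟨A i, hA i⟩ j) * saitoMatrix b := by
    ext i j
    have hrow := congrArg (fun θ : M => (θ : n → R) j) (b.sum_repr ⟨A i, hA i⟩)
    simp only [Submodule.coe_sum, Submodule.coe_smul, Finset.sum_apply, Pi.smul_apply,
      smul_eq_mul] at hrow
    exact hrow.symm
  rw [hmul, Matrix.det_mul]
  exact dvd_mul_left _ _

theorem finrank_eq_card_of_det_ne_zero [IsDomain R] {M : Submodule R (n → R)} {A : Matrix n n R}
    (hA : ∀ i, A i ∈ M) (hdet : A.det ≠ 0) [Module.Finite R M] :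
    Module.finrank R M = Fintype.card n := by
  refine le_antisymm (by simpa using Submodule.finrank_le M) ?_
  have hrows : LinearIndependent R fun i => (⟨A i, hA i⟩ : M) :=
    .of_comp M.subtype (Matrix.linearIndependent_rows_of_det_ne_zero hdet)
  exact hrows.fintype_card_le_finrank

/-- The dilation `1 + (r - 1) a vᵀ`, which for `v ⬝ᵥ a = 1` fixes the hyperplane `v = 0` and scales
the transversal direction `a` by `r`. -/
def dilation (a v : n → R) (r : R) : Matrix n n R :=
  1 + Matrix.vecMulVec ((r - 1) • a) v

theorem dilation_mulVec_self {a v : n → R} (h : v ⬝ᵥ a = 1) (r : R) :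
    dilation a v r *ᵥ a = r • a := by
  simp [dilation, Matrix.add_mulVec, Matrix.vecMulVec_mulVec, h, sub_smul]

theorem det_dilation {a v : n → R} (h : v ⬝ᵥ a = 1) (r : R) : (dilation a v r).det = r := by
  rw [dilation, Matrix.vecMulVec_eq Unit, Matrix.det_one_add_replicateCol_mul_replicateRow,
    dotProduct_smul, h, smul_eq_mul, mul_one, add_sub_cancel]

end Determinants

section LinearForms

theorem derMap_linForm (a : Fin 4 → ℂ) (θ : Fin 4 → S4) :
    derMap (linForm a) θ = θ ⬝ᵥ (C ∘ a) := by
  simp [derMap, linForm, dotProduct, pderiv_X, Pi.single_apply]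

theorem mem_derivModule {ι : Type} {α : ι → Fin 4 → ℂ} {θ : Fin 4 → S4} :
    θ ∈ derivModule α ↔ ∀ H, linForm (α H) ∣ θ ⬝ᵥ (C ∘ α H) := by
  simp [derivModule, Ideal.mem_span_singleton, derMap_linForm]

theorem dotProduct_C_comp_sum_smul {κ : Type*} [Fintype κ] (θ : Fin 4 → S4) (c : κ → ℂ)
    (a : κ → Fin 4 → ℂ) : θ ⬝ᵥ (C ∘ ∑ i, c i • a i) = ∑ i, c i • (θ ⬝ᵥ (C ∘ a i)) := by
  simp only [dotProduct, smul_eq_C_mul, Finset.mul_sum, Function.comp_apply, Finset.sum_apply,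
    map_sum, Pi.smul_apply, smul_eq_mul, map_mul, mul_left_comm]
  exact Finset.sum_comm

theorem eval_linForm (a p : Fin 4 → ℂ) : eval p (linForm a) = a ⬝ᵥ p := by
  simp [linForm, dotProduct]

theorem pderiv_linForm (a : Fin 4 → ℂ) (j : Fin 4) : pderiv j (linForm a) = C (a j) := by
  simp [linForm, pderiv_X, Pi.single_apply]

theorem eval_pderiv_linForm_mul {a p : Fin 4 → ℂ} (hp : a ⬝ᵥ p = 0) (f : S4) (j : Fin 4) :
    eval p (pderiv j (linForm a * f)) = a j * eval p f := by
  simp [pderiv_linForm, eval_linForm, hp, mul_comm]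

theorem prime_linForm {a : Fin 4 → ℂ} (ha : a ≠ 0) : Prime (linForm a) := by
  obtain ⟨k, hk⟩ := Function.ne_iff.mp ha
  have hsum : linForm a = sumSMulX (Finsupp.equivFunOnFinite.symm a) := by
    simp [linForm, sumSMulX, Finsupp.linearCombination_apply, Finsupp.sum_fintype, smul_eq_C_mul]
  rw [hsum]
  exact (irreducible_sumSMulX _ ⟨k, by simpa using hk⟩
    fun r hr => isUnit_of_dvd_unit (hr k) (by simpa using hk)).prime

theorem exists_eq_smul_of_linForm_dvd {a b : Fin 4 → ℂ} (h : linForm a ∣ linForm b) :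
    ∃ c : ℂ, b = c • a := by
  obtain ⟨q, hq⟩ := h
  refine ⟨eval 0 q, funext fun j => ?_⟩
  rw [Pi.smul_apply, smul_eq_mul, mul_comm, ← eval_pderiv_linForm_mul (dotProduct_zero a), ← hq,
    pderiv_linForm, eval_C]

end LinearForms

section Saito

variable {ι : Type} {α : ι → Fin 4 → ℂ}

theorem IsArrangement.definingPolynomial_ne_zero [Fintype ι] (hα : IsArrangement α) :
    definingPolynomial α ≠ 0 :=
  Finset.prod_ne_zero_iff.mpr fun H _ => (prime_linForm (hα.ne_zero H)).ne_zero

theorem exists_rows_mem_derivModule_det_eq [Fintype ι] [DecidableEq ι] {H : ι} (hH : α H ≠ 0) :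
    ∃ A : Matrix (Fin 4) (Fin 4) S4, (∀ i, A i ∈ derivModule α) ∧
      A.det = definingPolynomial α * (∏ K ∈ {H}ᶜ, linForm (α K)) ^ 3 := by
  obtain ⟨k, hk⟩ := Function.ne_iff.mp hH
  let a : Fin 4 → S4 := C ∘ α H
  let v : Fin 4 → S4 := C ∘ Pi.single k (α H k)⁻¹
  have hva : v ⬝ᵥ a = 1 := by
    rw [← RingHom.map_dotProduct, single_dotProduct, inv_mul_cancel₀ hk, map_one]
  let D : Matrix (Fin 4) (Fin 4) S4 := dilation a v (linForm (α H))
  refine ⟨(∏ K ∈ {H}ᶜ, linForm (α K)) • D, fun i => mem_derivModule.mpr fun K => ?_, ?_⟩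
  · change _ ∣ ((∏ K ∈ {H}ᶜ, linForm (α K)) • D i) ⬝ᵥ _
    rw [smul_dotProduct, smul_eq_mul]
    obtain rfl | hK := eq_or_ne K H
    · have hDa : D i ⬝ᵥ a = linForm (α K) * a i := congrFun (dilation_mulVec_self hva _) i
      change _ ∣ _ * (D i ⬝ᵥ a)
      rw [hDa]
      exact dvd_mul_of_dvd_right (dvd_mul_right _ _) _
    · refine dvd_mul_of_dvd_left (Finset.dvd_prod_of_mem (fun K => linForm (α K)) ?_) _
      simpa using hK
  · rw [Matrix.det_smul, det_dilation hva, Fintype.card_fin, definingPolynomial,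
      Fintype.prod_eq_mul_prod_compl H]
    ring

theorem IsArrangement.finrank_derivModule [Finite ι] [Nonempty ι]
    (hα : IsArrangement α) : Module.finrank S4 (derivModule α) = 4 := by
  classical
  have := Fintype.ofFinite ι
  obtain ⟨A, hA, hdet⟩ := exists_rows_mem_derivModule_det_eq (hα.ne_zero (Classical.arbitrary ι))
  refine finrank_eq_card_of_det_ne_zero hA (hdet ▸ ?_)
  exact mul_ne_zero hα.definingPolynomial_ne_zero <| pow_ne_zero _ <|
    Finset.prod_ne_zero_iff.mpr fun K _ => (prime_linForm (hα.ne_zero K)).ne_zero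

theorem IsArrangement.det_saitoMatrix_dvd_definingPolynomial [Fintype ι] [Nonempty ι]
    (hα : IsArrangement α) (b : Module.Basis (Fin 4) S4 (derivModule α)) :
    (saitoMatrix b).det ∣ definingPolynomial α := by
  classical
  refine dvd_of_forall_dvd_mul (s := Finset.univ)
    (f := fun H => (∏ K ∈ {H}ᶜ, linForm (α K)) ^ 3) (fun c hc => ?_) fun H _ => ?_
  · refine isUnit_of_forall_dvd_prod_compl_pow (fun H => prime_linForm (hα.ne_zero H))
      (fun H K hHK hdvd => ?_) fun H => hc H (Finset.mem_univ H)
    obtain ⟨c, hc⟩ := exists_eq_smul_of_linForm_dvd hdvd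
    exact hα.ne_smul hHK c hc
  · obtain ⟨A, hA, hdet⟩ := exists_rows_mem_derivModule_det_eq (hα.ne_zero H)
    exact hdet ▸ det_saitoMatrix_dvd_det b hA

end Saito

section QuadruplePoint

theorem eval_pderiv_eq_zero_of_mem_ker_sq {R σ : Type*} [CommRing R] {p : σ → R}
    {f : MvPolynomial σ R} (hf : f ∈ RingHom.ker (eval p) ^ 2) (j : σ) :
    eval p (pderiv j f) = 0 := by
  rw [sq] at hf
  induction hf using Submodule.mul_induction_on' with
  | mem_mul_mem g hg h hh => simp [RingHom.mem_ker.mp hg, RingHom.mem_ker.mp hh]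
  | add g _ h _ hg hh => simp [hg, hh]

namespace IsGenericQuadruplePoint

variable {ι : Type} {α : ι → Fin 4 → ℂ} {p : Fin 4 → ℂ} {H : Fin 4 ↪ ι}

theorem dotProduct_eq_zero (hp : IsGenericQuadruplePoint α p H) (i : Fin 4) : α (H i) ⬝ᵥ p = 0 :=
  (hp.dotProduct_eq_zero_iff _).mpr ⟨i, rfl⟩

theorem eq_zero_of_sum_smul_eq_zero (hp : IsGenericQuadruplePoint α p H) {c : Fin 4 → ℂ}
    {k : Fin 4} (hk : c k = 0) (hc : ∑ i, c i • α (H i) = 0) : c = 0 := by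
  rw [Fin.sum_univ_succAbove _ k, hk, zero_smul, zero_add] at hc
  have hzero := Fintype.linearIndependent_iff.mp (hp.linearIndependent k) _ hc
  exact funext fun i => (Fin.eq_self_or_eq_succAbove k i).elim (fun h => h ▸ hk)
    fun ⟨j, hj⟩ => hj ▸ hzero j

theorem exists_relation (hp : IsGenericQuadruplePoint α p H) :
    ∃ c : Fin 4 → ℂ, (∀ i, c i ≠ 0) ∧ ∑ i, c i • α (H i) = 0 := by
  let L : Matrix (Fin 4) (Fin 4) ℂ := Matrix.of fun i => α (H i)
  have hdet : L.det = 0 :=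
    Matrix.exists_mulVec_eq_zero_iff.mp ⟨p, hp.ne_zero, funext hp.dotProduct_eq_zero⟩
  obtain ⟨c, hc0, hc⟩ := Matrix.exists_vecMul_eq_zero_iff.mpr hdet
  have hrel : ∑ i, c i • α (H i) = 0 := by rw [← hc, Matrix.vecMul_eq_sum]; rfl
  exact ⟨c, fun k hk => hc0 (hp.eq_zero_of_sum_smul_eq_zero hk hrel), hrel⟩

/-- Differentiating `∑ i, c i * θ (α_i) = 0` at `p` gives a second relation between the forms,
which genericity forces to be proportional to `c`. -/
theorem eval_eq_eval (hp : IsGenericQuadruplePoint α p H) {θ f : Fin 4 → S4}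
    (hf : ∀ i, θ ⬝ᵥ (C ∘ α (H i)) = linForm (α (H i)) * f i) (i k : Fin 4) :
    eval p (f i) = eval p (f k) := by
  obtain ⟨c, hc0, hc⟩ := hp.exists_relation
  have hsum : ∑ i, c i • (linForm (α (H i)) * f i) = 0 := by
    simp only [← hf, ← dotProduct_C_comp_sum_smul, hc]
    simp [dotProduct]
  have hrel : ∑ i, (c i * eval p (f i)) • α (H i) = 0 := by
    ext j
    have hderiv := congrArg (fun g => eval p (pderiv j g)) hsum
    simp only [map_sum, Derivation.map_smul, smul_eval, map_zero,
      eval_pderiv_linForm_mul (hp.dotProduct_eq_zero _)] at hderiv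
    simpa [mul_assoc, mul_comm, mul_left_comm] using hderiv
  have hdiff : ∑ i, (c i * (eval p (f i) - eval p (f k))) • α (H i) = 0 := by
    simp only [mul_sub, sub_smul, Finset.sum_sub_distrib, hrel, zero_sub, neg_eq_zero]
    simp only [mul_comm (c _), mul_smul, ← Finset.smul_sum, hc, smul_zero]
  have hzero := congrFun (hp.eq_zero_of_sum_smul_eq_zero (k := k) (by simp) hdiff) i
  exact sub_eq_zero.mp ((mul_eq_zero.mp hzero).resolve_left (hc0 i))

/-- The quotients `θ(α_i) / α_i` agree at `p`, so column operations leave two columns vanishing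
there. -/
theorem exists_det_eq_prod_mul (hp : IsGenericQuadruplePoint α p H)
    {B : Matrix (Fin 4) (Fin 4) S4} (hB : ∀ i, B i ∈ derivModule α) :
    ∃ g ∈ RingHom.ker (eval p) ^ 2, B.det = (∏ i : Fin 3, linForm (α (H i.succ))) * g := by
  obtain ⟨m, hm⟩ := exists_linearIndependent_cons_of_lt_finrank
    (v := fun i : Fin 3 => α (H i.succ)) (hp.linearIndependent 0) (by simp)
  choose F hF using fun i k => mem_derivModule.mp (hB i) (H k)
  let L : Matrix (Fin 4) (Fin 4) ℂ := Matrix.of (Fin.cons m fun i => α (H i.succ))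
  let G : Matrix (Fin 4) (Fin 4) S4 :=
    Matrix.of fun i => Fin.cons (B i ⬝ᵥ (C ∘ m)) fun k => F i k.succ
  have hL : L.det ≠ 0 :=
    ((Matrix.isUnit_iff_isUnit_det L).mp (Matrix.linearIndependent_rows_iff_isUnit.mp hm)).ne_zero
  have hmul : B * ((C : ℂ →+* S4).mapMatrix L)ᵀ =
      G * Matrix.diagonal (Fin.cons 1 fun i => linForm (α (H i.succ))) := by
    ext1 i j
    rw [Matrix.mul_diagonal]
    cases j using Fin.cases with
    | zero => exact (mul_one _).symm
    | succ j => exact (hF i j.succ).trans (mul_comm _ _)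
  have hG : G.det ∈ RingHom.ker (eval p) ^ 2 := by
    refine det_mem_pow_card_of_sub_mem (s := ({2, 3} : Finset (Fin 4))) (k := 1) (by decide)
      fun i j hj => ?_
    have hF_eq (j k : Fin 4) : F i j - F i k ∈ RingHom.ker (eval p) := by
      rw [RingHom.mem_ker, map_sub, hp.eval_eq_eval (hF i) j k, sub_self]
    obtain rfl | rfl : j = 2 ∨ j = 3 := by simpa using hj
    exacts [hF_eq 2 1, hF_eq 3 1]
  have hdet : B.det * C L.det = G.det * ∏ i : Fin 3, linForm (α (H i.succ)) := by
    have hdet_mul := congrArg Matrix.det hmul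
    rw [Matrix.det_mul, Matrix.det_transpose, ← RingHom.map_det, Matrix.det_mul,
      Matrix.det_diagonal, Fin.prod_univ_succ] at hdet_mul
    simpa using hdet_mul
  refine ⟨C L.det⁻¹ * G.det, Ideal.mul_mem_left _ _ hG, ?_⟩
  calc B.det = C L.det⁻¹ * (B.det * C L.det) := by
        rw [mul_left_comm, ← C_mul, inv_mul_cancel₀ hL, C_1, mul_one]
    _ = _ := by rw [hdet]; ring

theorem definingPolynomial_eq [Fintype ι] (hp : IsGenericQuadruplePoint α p H) :
    ∃ u : S4, eval p u ≠ 0 ∧ definingPolynomial α =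
      (∏ i : Fin 3, linForm (α (H i.succ))) * (linForm (α (H 0)) * u) := by
  classical
  refine ⟨∏ K ∈ (Finset.univ.map H)ᶜ, linForm (α K), ?_, ?_⟩
  · rw [map_prod, Finset.prod_ne_zero_iff]
    intro K hK
    rw [eval_linForm, Ne, hp.dotProduct_eq_zero_iff]
    simpa using hK
  · rw [definingPolynomial, ← Finset.prod_mul_prod_compl (Finset.univ.map H), Finset.prod_map,
      Fin.prod_univ_succ]
    ring

end IsGenericQuadruplePoint

end QuadruplePoint

theorem not_free_A69_general {ι : Type} [Finite ι] {α : ι → Fin 4 → ℂ} (hα : IsArrangement α)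
    {p : Fin 4 → ℂ} {H : Fin 4 ↪ ι} (hp : IsGenericQuadruplePoint α p H) :
    ¬ Module.Free S4 (derivModule α) := by
  intro _
  have := Fintype.ofFinite ι
  have : Nonempty ι := ⟨H 0⟩
  let b := Module.finBasisOfFinrankEq S4 (derivModule α) hα.finrank_derivModule
  obtain ⟨g, hg, hdet⟩ := hp.exists_det_eq_prod_mul (saitoMatrix_mem b)
  obtain ⟨u, hu, hQ⟩ := hp.definingPolynomial_eq
  have hdvd : g ∣ linForm (α (H 0)) * u := by
    rw [← mul_dvd_mul_iff_left (left_ne_zero_of_mul (hQ ▸ hα.definingPolynomial_ne_zero)),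
      ← hdet, ← hQ]
    exact hα.det_saitoMatrix_dvd_definingPolynomial b
  have hmem := Ideal.mem_of_dvd _ hdvd hg
  refine hα.ne_zero (H 0) (funext fun j => ?_)
  have hderiv := eval_pderiv_eq_zero_of_mem_ker_sq hmem j
  rw [eval_pderiv_linForm_mul (hp.dotProduct_eq_zero 0)] at hderiv
  exact (mul_eq_zero.mp hderiv).resolve_right hu

theorem isArrangement_A69 : IsArrangement A69 where
  ne_zero H h := by
    have hcoord := fun j => congrFun h j
    fin_cases H <;> simp [A69, Fin.forall_fin_succ] at hcoord
  ne_smul H K hHK c h := by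
    have hcoord := fun j => congrFun h j
    fin_cases H <;> fin_cases K <;> simp [A69, Fin.forall_fin_succ] at hcoord hHK <;> grind

theorem isGenericQuadruplePoint_A69 :
    IsGenericQuadruplePoint A69 ![1, -1, 0, 0] ⟨![2, 3, 4, 7], by decide⟩ where
  ne_zero := by simp
  dotProduct_eq_zero_iff K := by
    fin_cases K <;> simp [A69, dotProduct, Fin.sum_univ_succ]
  linearIndependent k := by
    rw [Fintype.linearIndependent_iff]
    intro g hg
    have hcoord := fun j => congrFun hg j
    fin_cases k <;>
      simp [A69, Fin.forall_fin_succ, Fin.sum_univ_succ, Fin.succAbove] at hcoord ⊢ <;>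
      grind

/-- The derivation module of 𝒜₆₉ is not a free `S`-module. -/
theorem not_free_A69 : ¬ Module.Free S4 ↥(derivModule A69) :=
  not_free_A69_general isArrangement_A69 isGenericQuadruplePoint_A69
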